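/- arXiv:2412.20556 — 3 statements merged into one kernel-verified Lean document; each statement's English description precedes it below -/
import Mathlib

section
/- Let Φ ⊆ ℝ^m be a nonempty closed convex set, ρ > 0, L ≥ 0, ε ≥ 0, K ≥ 1 an integer. Let V : ℝ^m → ℝ be continuous, ρ-weakly convex on Φ, and bounded below on Φ. Suppose φ₀ ∈ Φ and that for k = 0, …, K−1 there are vectors ζ_k ∈ ℝ^m with ‖ζ_k‖ ≤ L such that for all φ ∈ Φ, V(φ) ≥ V(φ_k) − ε + ⟨ζ_k, φ − φ_k⟩ − (ρ/2)‖φ − φ_k‖², and define φ_{k+1} := proj_Φ(φ_k − η ζ_k) with step size η = 1/√K. Then there exists k ∈ {0, 1, …, K−1} such that ‖2ρ(φ_k − prox_{V/2ρ}(φ_k))‖² ≤ 2(V_{1/2ρ}(φ₀) − inf_{φ∈Φ} V(φ) + ρL²)/√K + 4ρε, where V_{1/2ρ}(φ) := min_{φ'∈Φ}{V(φ') + ρ‖φ − φ'‖²} and prox_{V/2ρ}(φ) is its unique minimizer. -/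
open scoped RealInnerProductSpace

theorem aux_small (a b : ℝ) (h : ∀ t : ℝ, 0 < t → t ≤ 1 → a ≤ t * b) : a ≤ 0 := by
  by_contra hc
  push Not at hc
  have hb : a ≤ b := by simpa using h 1 one_pos le_rfl
  have hbp : 0 < b := lt_of_lt_of_le hc hb
  have h1 := h (a / (2 * b)) (by positivity) (by rw [div_le_one (by positivity)]; linarith)
  have h2 : a / (2 * b) * b = a / 2 := by field_simp
  linarith

theorem aux_proj {E : Type*} [NormedAddCommGroup E] [InnerProductSpace ℝ E] (Φ : Set E)
    (hΦ : Convex ℝ Φ) (q z p : E) (hq : q ∈ Φ) (hp : p ∈ Φ)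
    (hmin : ∀ y ∈ Φ, ‖q - z‖ ≤ ‖y - z‖) : ‖q - p‖ ^ 2 ≤ ‖z - p‖ ^ 2 := by
  have key : -(2 * ⟪q - z, p - q⟫) ≤ 0 := by
    apply aux_small _ (‖p - q‖ ^ 2)
    intro t ht ht1
    have hy : q + t • (p - q) ∈ Φ := hΦ.add_smul_sub_mem hq hp ⟨ht.le, ht1⟩
    have h := pow_le_pow_left₀ (norm_nonneg _) (hmin _ hy) 2
    have e : q + t • (p - q) - z = (q - z) + t • (p - q) := by abel
    rw [e, norm_add_sq_real, real_inner_smul_right, norm_smul, mul_pow, Real.norm_eq_abs,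
      sq_abs] at h
    have : 0 ≤ t * (2 * ⟪q - z, p - q⟫ + t * ‖p - q‖ ^ 2) := by linarith
    have := nonneg_of_mul_nonneg_right this ht
    linarith
  have e : z - p = -((q - z) + (p - q)) := by abel
  rw [e, norm_neg, norm_add_sq_real, norm_sub_rev q p]
  nlinarith [sq_nonneg ‖q - z‖]

theorem aux_strong {E : Type*} [NormedAddCommGroup E] [InnerProductSpace ℝ E] (Φ : Set E)
    (hΦ : Convex ℝ Φ) (ρ : ℝ) (V : E → ℝ)
    (hwc : ∀ x ∈ Φ, ∀ y ∈ Φ, ∀ τ ∈ Set.Icc (0:ℝ) 1,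
      V (τ • x + (1 - τ) • y) ≤
        τ * V x + (1 - τ) * V y + ρ * τ * (1 - τ) / 2 * ‖x - y‖ ^ 2)
    (x p : E) (hx : x ∈ Φ) (hp : p ∈ Φ)
    (hmin : ∀ y ∈ Φ, V p + ρ * ‖x - p‖ ^ 2 ≤ V y + ρ * ‖x - y‖ ^ 2) :
    V p + 3 / 2 * ρ * ‖x - p‖ ^ 2 ≤ V x := by
  have key : V p + 3 / 2 * ρ * ‖x - p‖ ^ 2 - V x ≤ 0 := by
    apply aux_small _ (ρ / 2 * ‖x - p‖ ^ 2)
    intro t ht ht1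
    have hy : t • x + (1 - t) • p ∈ Φ := hΦ hx hp ht.le (by linarith) (by ring)
    have h := hmin _ hy
    have h2 := hwc x hx p hp t ⟨ht.le, ht1⟩
    have e : x - (t • x + (1 - t) • p) = (1 - t) • (x - p) := by module
    rw [e, norm_smul, mul_pow, Real.norm_eq_abs, sq_abs] at h
    have : 0 ≤ t * (V x - V p - 3 / 2 * ρ * ‖x - p‖ ^ 2 + t * (ρ / 2 * ‖x - p‖ ^ 2)) := by
      linarith
    have := nonneg_of_mul_nonneg_right this ht
    linarith
  linarith

/-- convergence theorem for the inexact subgradient-max algorithm. With step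
size η = 1/√K, some iterate φ_k has a Moreau-envelope gradient 2ρ(φ_k − prox_{V/2ρ}(φ_k))
of squared norm at most 2(V_{1/2ρ}(φ₀) − inf_Φ V + ρL²)/√K + 4ρε. -/
theorem subgradient_max_convergence {m : ℕ} (Φ : Set (EuclideanSpace ℝ (Fin m)))
    (hne : Φ.Nonempty) (hcl : IsClosed Φ) (hΦ : Convex ℝ Φ)
    (ρ L ε : ℝ) (hρ : 0 < ρ) (hL : 0 ≤ L) (hε : 0 ≤ ε)
    (K : ℕ) (hK : 1 ≤ K)
    (V : EuclideanSpace ℝ (Fin m) → ℝ) (hcont : Continuous V)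
    (hwc : ∀ x ∈ Φ, ∀ y ∈ Φ, ∀ τ ∈ Set.Icc (0:ℝ) 1,
      V (τ • x + (1 - τ) • y) ≤
        τ * V x + (1 - τ) * V y + ρ * τ * (1 - τ) / 2 * ‖x - y‖ ^ 2)
    (hbdd : BddBelow (V '' Φ))
    (φ : ℕ → EuclideanSpace ℝ (Fin m)) (ζ : ℕ → EuclideanSpace ℝ (Fin m))
    (hφ0 : φ 0 ∈ Φ)
    (hζnorm : ∀ k < K, ‖ζ k‖ ≤ L)
    (hsub : ∀ k < K, ∀ ψ ∈ Φ,
      V ψ ≥ V (φ k) - ε + ⟪ζ k, ψ - φ k⟫ - ρ / 2 * ‖ψ - φ k‖ ^ 2)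
    (hproj : ∀ k < K, φ (k + 1) ∈ Φ ∧ ∀ y ∈ Φ,
      ‖φ (k + 1) - (φ k - (1 / Real.sqrt K) • ζ k)‖ ≤
        ‖y - (φ k - (1 / Real.sqrt K) • ζ k)‖)
    (prox : EuclideanSpace ℝ (Fin m) → EuclideanSpace ℝ (Fin m))
    (hproxmem : ∀ ψ, prox ψ ∈ Φ)
    (hproxmin : ∀ ψ, ∀ y ∈ Φ,
      V (prox ψ) + ρ * ‖ψ - prox ψ‖ ^ 2 ≤ V y + ρ * ‖ψ - y‖ ^ 2) :
    ∃ k < K, ‖(2 * ρ) • (φ k - prox (φ k))‖ ^ 2 ≤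
      2 * ((V (prox (φ 0)) + ρ * ‖φ 0 - prox (φ 0)‖ ^ 2) - sInf (V '' Φ) + ρ * L ^ 2) /
        Real.sqrt K + 4 * ρ * ε := by
  by_contra hcon
  push Not at hcon
  have hKpos : (0:ℝ) < K := by exact_mod_cast hK
  have hsq : 0 < Real.sqrt K := Real.sqrt_pos.mpr hKpos
  set η : ℝ := 1 / Real.sqrt K with hη
  have hηpos : 0 < η := by positivity
  have hηK : η ^ 2 * K = 1 := by
    rw [hη, div_pow, Real.sq_sqrt hKpos.le]; field_simp
  set M : ℕ → ℝ := fun k => V (prox (φ k)) + ρ * ‖φ k - prox (φ k)‖ ^ 2 with hM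
  have hmem : ∀ k ≤ K, φ k ∈ Φ := by
    intro k hk
    cases k with
    | zero => exact hφ0
    | succ j => exact (hproj j hk).1
  have step : ∀ k < K, M (k + 1) < M k - η ^ 2 * (M 0 - sInf (V '' Φ)) := by
    intro k hk
    have h1 := hproxmin (φ (k + 1)) (prox (φ k)) (hproxmem _)
    have h2 := aux_proj Φ hΦ _ _ (prox (φ k)) (hproj k hk).1 (hproxmem _) (hproj k hk).2
    have e : φ k - η • ζ k - prox (φ k) = (φ k - prox (φ k)) - η • ζ k := by abel
    rw [e, norm_sub_sq_real _ (η • ζ k), real_inner_smul_right, norm_smul, mul_pow, Real.norm_eq_abs,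
      sq_abs] at h2
    have h3 := aux_strong Φ hΦ ρ V hwc (φ k) (prox (φ k)) (hmem k hk.le) (hproxmem _)
      (hproxmin (φ k))
    have h4 := hsub k hk (prox (φ k)) (hproxmem _)
    rw [← neg_sub (φ k) (prox (φ k)), inner_neg_right, norm_neg, real_inner_comm] at h4
    have h5 : ‖ζ k‖ ^ 2 ≤ L ^ 2 := pow_le_pow_left₀ (norm_nonneg _) (hζnorm k hk) 2
    have h6 := hcon k hk
    rw [norm_smul, mul_pow, Real.norm_eq_abs, sq_abs, div_eq_mul_one_div _ (Real.sqrt K)] at h6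
    change 2 * (M 0 - sInf (V '' Φ) + ρ * L ^ 2) * η + 4 * ρ * ε < _ at h6
    change M (k + 1) ≤ _ at h1
    have hMk : M k = V (prox (φ k)) + ρ * ‖φ k - prox (φ k)‖ ^ 2 := rfl
    have h7 := mul_le_mul_of_nonneg_left h2 hρ.le
    have h8 := mul_le_mul_of_nonneg_left h5 (by positivity : 0 ≤ ρ * η ^ 2)
    have h9 := mul_lt_mul_of_pos_left h6 hηpos
    have h10 : ρ * ‖φ k - prox (φ k)‖ ^ 2 - ε ≤ ⟪φ k - prox (φ k), ζ k⟫ := by linarith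
    have h11 := mul_le_mul_of_nonneg_left h10 (by positivity : 0 ≤ 2 * ρ * η)
    linarith
  have ind : ∀ k, k ≤ K → M k ≤ M 0 - k * (η ^ 2 * (M 0 - sInf (V '' Φ))) := by
    intro k
    induction k with
    | zero => intro _; simp
    | succ j ih =>
      intro hj
      have := ih (by omega)
      have := step j hj
      push_cast
      linarith
  obtain ⟨j, rfl⟩ : ∃ j, K = j + 1 := ⟨K - 1, by omega⟩
  have a1 := ind j (by omega)
  have a2 := step j (by omega)
  have a3 : sInf (V '' Φ) ≤ V (prox (φ (j + 1))) :=
    csInf_le hbdd ⟨_, hproxmem _, rfl⟩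
  have a4 : V (prox (φ (j + 1))) ≤ M (j + 1) := by
    have : 0 ≤ ρ * ‖φ (j + 1) - prox (φ (j + 1))‖ ^ 2 := by positivity
    simp only [hM]; linarith
  have a5 : (j : ℝ) * (η ^ 2 * (M 0 - sInf (V '' Φ))) + η ^ 2 * (M 0 - sInf (V '' Φ))
      = M 0 - sInf (V '' Φ) := by
    push_cast at hηK
    linear_combination (M 0 - sInf (V '' Φ)) * hηK
  linarith
end

section
/- Let P be a Borel probability measure on ℝ^d with finite second moment, and let T₁, T₂ : ℝ^d → ℝ^d be Borel measurable maps with ∫‖T_i(x)‖² dP(x) < ∞ for i = 1, 2. Set Q_i := (T_i)_#P and assume each T_i is an optimal transport map, i.e., ∫‖T_i(x) − x‖² dP(x) = W₂²(Q_i, P). Then for every t ∈ [0,1], the generalized geodesic μ_t := ((1−t)T₁ + tT₂)_#P satisfies (1/2)W₂²(μ_t, P) ≤ (1−t)·(1/2)W₂²(Q₁, P) + t·(1/2)W₂²(Q₂, P) − (t(1−t)/2)∫‖T₁(x) − T₂(x)‖² dP(x). In particular, Q ↦ (1/2)W₂²(Q, P) is 1-strongly convex along generalized geodesics centered at P. 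-/
open MeasureTheory

/-- The squared Wasserstein-2 distance between two Borel probability measures on ℝ^d,
defined as the infimum of ∫‖x−y‖² dπ over couplings π. -/
noncomputable def W2sq {d : ℕ} (μ ν : Measure (EuclideanSpace ℝ (Fin d))) : ℝ :=
  sInf { c : ℝ |
    ∃ π : Measure (EuclideanSpace ℝ (Fin d) × EuclideanSpace ℝ (Fin d)),
      IsProbabilityMeasure π ∧ π.map Prod.fst = μ ∧ π.map Prod.snd = ν ∧
      c = ∫ p, ‖p.1 - p.2‖ ^ 2 ∂π }

/-- strong convexity of Q ↦ (1/2)W₂²(Q, P) along generalized geodesics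
centered at P: if T₁, T₂ are optimal transport maps from P to Q₁, Q₂, then along the
curve μ_t = ((1−t)T₁ + tT₂)_#P one has
(1/2)W₂²(μ_t,P) ≤ (1−t)(1/2)W₂²(Q₁,P) + t(1/2)W₂²(Q₂,P) − (t(1−t)/2)∫‖T₁−T₂‖²dP. -/
theorem half_W2sq_strongly_convex_agg {d : ℕ} (P : Measure (EuclideanSpace ℝ (Fin d)))
    [IsProbabilityMeasure P] (hP2 : Integrable (fun x => ‖x‖ ^ 2) P)
    (T₁ T₂ : EuclideanSpace ℝ (Fin d) → EuclideanSpace ℝ (Fin d))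
    (hT₁ : Measurable T₁) (hT₂ : Measurable T₂)
    (hT₁int : Integrable (fun x => ‖T₁ x‖ ^ 2) P)
    (hT₂int : Integrable (fun x => ‖T₂ x‖ ^ 2) P)
    (hopt₁ : ∫ x, ‖T₁ x - x‖ ^ 2 ∂P = W2sq (P.map T₁) P)
    (hopt₂ : ∫ x, ‖T₂ x - x‖ ^ 2 ∂P = W2sq (P.map T₂) P) :
    ∀ t ∈ Set.Icc (0:ℝ) 1,
      1 / 2 * W2sq (P.map (fun x => (1 - t) • T₁ x + t • T₂ x)) P ≤
        (1 - t) * (1 / 2 * W2sq (P.map T₁) P) + t * (1 / 2 * W2sq (P.map T₂) P) -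
          t * (1 - t) / 2 * ∫ x, ‖T₁ x - T₂ x‖ ^ 2 ∂P := by
  intro t ht
  have hm₁ : MemLp T₁ 2 P := (memLp_two_iff_integrable_sq_norm hT₁.aestronglyMeasurable).2 hT₁int
  have hm₂ : MemLp T₂ 2 P := (memLp_two_iff_integrable_sq_norm hT₂.aestronglyMeasurable).2 hT₂int
  have hmi : MemLp (fun x => x) 2 P :=
    (memLp_two_iff_integrable_sq_norm measurable_id.aestronglyMeasurable).2 hP2
  have i₁ : Integrable (fun x => ‖T₁ x - x‖ ^ 2) P :=
    (memLp_two_iff_integrable_sq_norm (hm₁.sub hmi).1).1 (hm₁.sub hmi)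
  have i₂ : Integrable (fun x => ‖T₂ x - x‖ ^ 2) P :=
    (memLp_two_iff_integrable_sq_norm (hm₂.sub hmi).1).1 (hm₂.sub hmi)
  have i₃ : Integrable (fun x => ‖T₁ x - T₂ x‖ ^ 2) P :=
    (memLp_two_iff_integrable_sq_norm (hm₁.sub hm₂).1).1 (hm₁.sub hm₂)
  have hT : Measurable (fun x => (1 - t) • T₁ x + t • T₂ x) := by fun_prop
  have hpair : Measurable (fun x => ((1 - t) • T₁ x + t • T₂ x, x)) := hT.prodMk measurable_id
  have key : W2sq (P.map (fun x => (1 - t) • T₁ x + t • T₂ x)) P ≤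
      ∫ x, ‖((1 - t) • T₁ x + t • T₂ x) - x‖ ^ 2 ∂P := by
    apply csInf_le
    · refine ⟨0, ?_⟩
      rintro c ⟨π, -, -, -, rfl⟩
      exact integral_nonneg fun p => by positivity
    · refine ⟨P.map (fun x => ((1 - t) • T₁ x + t • T₂ x, x)),
        Measure.isProbabilityMeasure_map hpair.aemeasurable, ?_, ?_, ?_⟩
      · rw [Measure.map_map measurable_fst hpair]; rfl
      · rw [Measure.map_map measurable_snd hpair]; exact Measure.map_id
      · rw [integral_map hpair.aemeasurable]
        exact (by fun_prop : Continuous fun p : EuclideanSpace ℝ (Fin d) ×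
          EuclideanSpace ℝ (Fin d) => ‖p.1 - p.2‖ ^ 2).aestronglyMeasurable
  have pt : ∀ x, ‖((1 - t) • T₁ x + t • T₂ x) - x‖ ^ 2 =
      (1 - t) * ‖T₁ x - x‖ ^ 2 + t * ‖T₂ x - x‖ ^ 2 - t * (1 - t) * ‖T₁ x - T₂ x‖ ^ 2 := by
    intro x
    have e1 : ((1 - t) • T₁ x + t • T₂ x) - x = (1 - t) • (T₁ x - x) + t • (T₂ x - x) := by
      module
    have e2 : T₁ x - T₂ x = (T₁ x - x) - (T₂ x - x) := by abel
    rw [e1, e2, norm_add_sq_real, norm_sub_sq_real (T₁ x - x) (T₂ x - x), norm_smul, norm_smul, inner_smul_left,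
      inner_smul_right, mul_pow, mul_pow, Real.norm_eq_abs, Real.norm_eq_abs, sq_abs, sq_abs]
    simp only [conj_trivial]
    ring
  have eq : ∫ x, ‖((1 - t) • T₁ x + t • T₂ x) - x‖ ^ 2 ∂P =
      (1 - t) * ∫ x, ‖T₁ x - x‖ ^ 2 ∂P + t * ∫ x, ‖T₂ x - x‖ ^ 2 ∂P
        - t * (1 - t) * ∫ x, ‖T₁ x - T₂ x‖ ^ 2 ∂P := by
    simp_rw [pt]
    have i₄ : Integrable (fun x => (1 - t) * ‖T₁ x - x‖ ^ 2 + t * ‖T₂ x - x‖ ^ 2) P :=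
      (i₁.const_mul _).add (i₂.const_mul _)
    rw [integral_sub i₄ (i₃.const_mul _),
      integral_add (i₁.const_mul _) (i₂.const_mul _), integral_const_mul, integral_const_mul,
      integral_const_mul]
  rw [← hopt₁, ← hopt₂]
  rw [eq] at key
  linarith
end

section
/- Let Φ ⊆ ℝ^m be a nonempty closed convex set, let V : ℝ^m → ℝ be differentiable with L_V-Lipschitz gradient, let φ ∈ Φ, g ∈ ℝ^m, η > 0, and set φ⁺ := proj_Φ(φ − ηg). Then for every s > 0, V(φ⁺) ≤ V(φ) − (1/(2η) − L_V/2 − s/2)·‖φ⁺ − φ‖² + (1/(2s))·‖g − ∇V(φ)‖². -/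
open scoped RealInnerProductSpace

/-- one-step descent inequality for an inexact projected gradient step on a
function with L_V-Lipschitz gradient: for every s > 0,
V(φ⁺) ≤ V(φ) − (1/(2η) − L_V/2 − s/2)‖φ⁺ − φ‖² + (1/(2s))‖g − ∇V(φ)‖². -/
theorem projected_gradient_descent_step {m : ℕ} (Φ : Set (EuclideanSpace ℝ (Fin m)))
    (hne : Φ.Nonempty) (hcl : IsClosed Φ) (hΦ : Convex ℝ Φ)
    (V : EuclideanSpace ℝ (Fin m) → ℝ)
    (V' : EuclideanSpace ℝ (Fin m) → EuclideanSpace ℝ (Fin m))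
    (hdiff : ∀ x, HasGradientAt V (V' x) x)
    (L_V : ℝ) (hLV : 0 ≤ L_V)
    (hLip : ∀ x y, ‖V' x - V' y‖ ≤ L_V * ‖x - y‖)
    (φ : EuclideanSpace ℝ (Fin m)) (hφ : φ ∈ Φ)
    (g : EuclideanSpace ℝ (Fin m)) (η : ℝ) (hη : 0 < η)
    (φp : EuclideanSpace ℝ (Fin m)) (hφp : φp ∈ Φ)
    (hproj : ∀ y ∈ Φ, ‖φp - (φ - η • g)‖ ≤ ‖y - (φ - η • g)‖) :
    ∀ s : ℝ, 0 < s →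
      V φp ≤ V φ - (1 / (2 * η) - L_V / 2 - s / 2) * ‖φp - φ‖ ^ 2 +
        1 / (2 * s) * ‖g - V' φ‖ ^ 2 := by
  intro s hs
  obtain ⟨d, hd⟩ : ∃ d, d = φp - φ := ⟨_, rfl⟩
  have hφpd : φp = φ + d := by rw [hd]; abel
  rw [← hd]
  -- descent lemma along the segment
  have hder : ∀ t : ℝ, HasDerivAt
      (fun t : ℝ => V (φ + t • d) - t * ⟪V' φ, d⟫ - L_V / 2 * t ^ 2 * ‖d‖ ^ 2)
      (⟪V' (φ + t • d), d⟫ - ⟪V' φ, d⟫ - L_V * t * ‖d‖ ^ 2) t := by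
    intro t
    have h1 : HasDerivAt (fun t : ℝ => φ + t • d) d t := by
      simpa using ((hasDerivAt_id t).smul_const d).const_add φ
    have h2 := (hdiff (φ + t • d)).hasFDerivAt.comp_hasDerivAt t h1
    have h3 : HasDerivAt (fun t : ℝ => V (φ + t • d)) ⟪V' (φ + t • d), d⟫ t := by
      simpa [Function.comp_def] using h2
    have h4 : HasDerivAt (fun t : ℝ => t * ⟪V' φ, d⟫) ⟪V' φ, d⟫ t := by
      simpa using (hasDerivAt_id t).mul_const ⟪V' φ, d⟫
    have h5 : HasDerivAt (fun t : ℝ => L_V / 2 * t ^ 2 * ‖d‖ ^ 2) (L_V * t * ‖d‖ ^ 2) t := by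
      have := ((hasDerivAt_pow 2 t).const_mul (L_V / 2)).mul_const (‖d‖ ^ 2)
      have e : L_V / 2 * (((2 : ℕ) : ℝ) * t ^ (2 - 1)) * ‖d‖ ^ 2 = L_V * t * ‖d‖ ^ 2 := by
        have : t ^ (2 - 1) = t := pow_one t
        rw [this]
        push_cast
        ring
      exact e ▸ this
    exact (h3.sub h4).sub h5
  have hanti := antitoneOn_of_hasDerivWithinAt_nonpos (convex_Icc (0 : ℝ) 1)
    (fun t _ => (hder t).continuousAt.continuousWithinAt)
    (fun t _ => (hder t).hasDerivWithinAt) (by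
      intro t ht
      rw [interior_Icc] at ht
      have h1 := real_inner_le_norm (V' (φ + t • d) - V' φ) d
      rw [inner_sub_left] at h1
      have h2 := hLip (φ + t • d) φ
      rw [add_sub_cancel_left, norm_smul, Real.norm_of_nonneg ht.1.le] at h2
      have h3 := mul_le_mul_of_nonneg_right h2 (norm_nonneg d)
      nlinarith)
  have hdesc := hanti (Set.left_mem_Icc.2 zero_le_one) (Set.right_mem_Icc.2 zero_le_one)
    zero_le_one
  simp only [one_smul, zero_smul, add_zero, ← hφpd] at hdesc
  -- projection
  have hp := hproj φ hφ
  have e1 : φp - (φ - η • g) = d + η • g := by rw [hd]; abel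
  have e2 : φ - (φ - η • g) = η • g := by abel
  rw [e1, e2] at hp
  have hp2 := pow_le_pow_left₀ (norm_nonneg _) hp 2
  rw [norm_add_sq_real, real_inner_smul_right, real_inner_comm] at hp2
  have hp3 : ⟪g, d⟫ ≤ - (1 / (2 * η) * ‖d‖ ^ 2) := by
    have : ⟪g, d⟫ + 1 / (2 * η) * ‖d‖ ^ 2
        = (‖d‖ ^ 2 + 2 * (η * ⟪g, d⟫)) / (2 * η) := by field_simp; ring
    have h0 : (‖d‖ ^ 2 + 2 * (η * ⟪g, d⟫)) / (2 * η) ≤ 0 :=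
      div_nonpos_of_nonpos_of_nonneg (by linarith) (by positivity)
    linarith
  -- Young
  have hy := (abs_le.1 (abs_real_inner_le_norm (g - V' φ) d)).1
  rw [inner_sub_left] at hy
  have hy2 : ‖g - V' φ‖ * ‖d‖ ≤ 1 / (2 * s) * ‖g - V' φ‖ ^ 2 + s / 2 * ‖d‖ ^ 2 := by
    have : 1 / (2 * s) * ‖g - V' φ‖ ^ 2 + s / 2 * ‖d‖ ^ 2 - ‖g - V' φ‖ * ‖d‖
        = (‖g - V' φ‖ - s * ‖d‖) ^ 2 / (2 * s) := by field_simp; ring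
    have h0 : 0 ≤ (‖g - V' φ‖ - s * ‖d‖) ^ 2 / (2 * s) := by positivity
    linarith
  linarith
end
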